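/- On-policy latent imitation bound: Let π* be a policy in a finite MDP, Z a finite set, φ : S → Z, R_Z : Z×A → [−R_max, R_max], P_Z a function where P_Z(·|z,a) is a probability distribution on S for every (z,a), and π_Z a latent policy assigning to each z∈Z a probability distribution π_Z(·|z) on A with π_Z(a|z) > 0 for all a,z. Define ε = (1/(1−γ)) ∑_{s∈S} d^{π*}(s) ∑_{a∈A} |R(s,a) − R_Z(φ(s),a)| + (2γ R_max/(1−γ)²) ∑_{s∈S} d^{π*}(s) ∑_{a∈A} D_TV(P(·|s,a) ‖ P_Z(·|φ(s),a)). Then, letting π_Z∘φ denote the policy s ↦ π_Z(·|φ(s)), PerfDiff(π_Z∘φ, π*) ≤ ε + (2R_max/(1−γ)²) · √( (1/2) ∑_{z∈Z} d^{π*}_Z(z) D_KL(π_{*,Z}(·|z) ‖ π_Z(·|z)) ), where d^{π*}_Z and π_{*,Z} are the marginalizations onto Z with respect to d^{π*}. -/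

import Mathlib

open Finset

noncomputable section

variable {S A Z : Type*}

/-- State distribution at time `t` when following policy `π` from initial distribution `μ`. -/
def stateDist [Fintype S] [Fintype A] (P : S → A → S → ℝ) (π : S → A → ℝ)
    (μ : S → ℝ) : ℕ → S → ℝ
  | 0 => μ
  | t + 1 => fun s' => ∑ s : S, ∑ a : A, π s a * P s a s' * stateDist P π μ t s

/-- Discounted visitation distribution `d^π`. -/
def visitation [Fintype S] [Fintype A] (P : S → A → S → ℝ) (π : S → A → ℝ)
    (μ : S → ℝ) (γ : ℝ) (s : S) : ℝ :=
  (1 - γ) * ∑' t : ℕ, γ ^ t * stateDist P π μ t s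

/-- Performance `J(π)`. -/
def perf [Fintype S] [Fintype A] (P : S → A → S → ℝ) (R : S → A → ℝ)
    (π : S → A → ℝ) (μ : S → ℝ) (γ : ℝ) : ℝ :=
  ∑' t : ℕ, γ ^ t * ∑ s : S, ∑ a : A, R s a * π s a * stateDist P π μ t s

/-- `PerfDiff(π, π')`. -/
def perfDiff [Fintype S] [Fintype A] (P : S → A → S → ℝ) (R : S → A → ℝ)
    (μ : S → ℝ) (γ : ℝ) (π π' : S → A → ℝ) : ℝ :=
  |perf P R π μ γ - perf P R π' μ γ|

/-- Total variation distance. -/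
def dTV {X : Type*} [Fintype X] (p q : X → ℝ) : ℝ :=
  (1 / 2) * ∑ x : X, |p x - q x|

/-- KL divergence. -/
def dKL {X : Type*} [Fintype X] (p q : X → ℝ) : ℝ :=
  ∑ x : X, p x * Real.log (p x / q x)

/-- Pearson chi-squared divergence (terms with `q x = 0` vanish by the `x / 0 = 0` convention). -/
def dChi2 {X : Type*} [Fintype X] (p q : X → ℝ) : ℝ :=
  ∑ x : X, (p x - q x) ^ 2 / q x

/-- `Err_ρ(π1, π2, F)` for a reward-like function `F`. -/
def errF [Fintype S] [Fintype A] (ρ : S → ℝ) (π1 π2 : S → A → ℝ) (F : S → A → ℝ) : ℝ :=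
  |∑ s : S, ρ s * ∑ a : A, (π1 s a - π2 s a) * F s a|

/-- `Err_ρ(π1, π2, G)` for a transition-like function `G`. -/
def errG [Fintype S] [Fintype A] (ρ : S → ℝ) (π1 π2 : S → A → ℝ) (G : S → A → S → ℝ) : ℝ :=
  ∑ s' : S, |∑ s : S, ρ s * ∑ a : A, (π1 s a - π2 s a) * G s a s'|

/-- Marginalization `ρ_Z` of a state distribution onto `Z` via `φ`. -/
def margDist [Fintype S] [DecidableEq Z] (φ : S → Z) (ρ : S → ℝ) (z : Z) : ℝ :=
  ∑ s : S, if φ s = z then ρ s else 0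

/-- Marginalization `π_Z` of a policy onto `Z` via `φ`, w.r.t. the state distribution `ρ`
(by the `x / 0 = 0` convention it takes a fixed arbitrary value when `ρ_Z(z) = 0`). -/
def margPolicy [Fintype S] [DecidableEq Z] (φ : S → Z) (ρ : S → ℝ) (π : S → A → ℝ)
    (z : Z) (a : A) : ℝ :=
  (∑ s : S, if φ s = z then ρ s * π s a else 0) / margDist φ ρ z

/-- Log-linear (softmax) policy `π_θ(a|z)`. -/
def softmaxPol {d : ℕ} [Fintype A] (θ : A → Fin d → ℝ) (z : Fin d → ℝ) (a : A) : ℝ :=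
  Real.exp (∑ i, θ a i * z i) / ∑ b : A, Real.exp (∑ i, θ b i * z i)

/-- Sum of absolute values of all partial derivatives of `L : ℝ^{d×|A|} → ℝ` at `θ`. -/
def gradL1 {d : ℕ} [Fintype A] [DecidableEq A] (L : (A → Fin d → ℝ) → ℝ)
    (θ : A → Fin d → ℝ) : ℝ :=
  ∑ a : A, ∑ i : Fin d, |fderiv ℝ L θ (Pi.single a (Pi.single i 1))|

/-!
The flow equation `d^π = (1 - γ) μ + γ d^π P_π` and the contractivity of `P_π'` in `ℓ¹` give
`(1 - γ) ‖d^π - d^π'‖₁ ≤ γ errG`, so the performance gap is controlled by the one-step errors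
`errF` and `errG` of the two policies under the visitation distribution of `π*`. Replacing `R` and
`P` by the latent models costs at most the model errors, since two action probabilities differ by at
most `1`. What remains depends on the state only through `φ`, and averaging over the fibres of `φ`
turns `π*` into its marginalization. The latent policy error is then bounded in total variation,
hence, by Pinsker's and Jensen's inequalities, by the relative entropy; the constant comes from
`2 R_max / (1 - γ) + 2 γ R_max / (1 - γ)² = 2 R_max / (1 - γ)²`.
-/

section Pinsker

open InformationTheory

variable {X : Type*} [Fintype X]

-- The difference of the two sides is convex on `[0, ∞)` with a critical point at `1`, since its
-- second derivative is `4 * (log x + x⁻¹ - 1)`.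
lemma three_mul_sub_one_sq_le_klFun_mul {x : ℝ} (hx : 0 ≤ x) :
    3 * (x - 1) ^ 2 ≤ klFun x * (2 * x + 4) := by
  let f : ℝ → ℝ := fun y => klFun y * (2 * y + 4) - 3 * (y - 1) ^ 2
  let f' : ℝ → ℝ := fun y => Real.log y * (2 * y + 4) + klFun y * 2 - 6 * (y - 1)
  have hasDerivAt_linear (y : ℝ) : HasDerivAt (fun y : ℝ => 2 * y + 4) 2 y := by
    simpa using ((hasDerivAt_id y).const_mul 2).add_const 4
  have hasDerivAt_f {y : ℝ} (hy : 0 < y) : HasDerivAt f (f' y) y := by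
    have hsq : HasDerivAt (fun y : ℝ => 3 * (y - 1) ^ 2) (6 * (y - 1)) y := by
      refine ((((hasDerivAt_id y).sub_const 1).pow 2).const_mul 3).congr_deriv ?_
      simp only [id_eq, Nat.cast_ofNat]
      ring
    exact ((hasDerivAt_klFun hy.ne').mul (hasDerivAt_linear y)).sub hsq
  have hasDerivAt_f' {y : ℝ} (hy : 0 < y) :
      HasDerivAt f' (4 * (Real.log y + y⁻¹ - 1)) y := by
    refine ((((Real.hasDerivAt_log hy.ne').mul (hasDerivAt_linear y)).add
      ((hasDerivAt_klFun hy.ne').mul_const 2)).sub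
        (((hasDerivAt_id y).sub_const 1).const_mul 6)).congr_deriv ?_
    field_simp
    ring
  have convexOn_f : ConvexOn ℝ (Set.Ici 0) f := by
    refine convexOn_of_hasDerivWithinAt2_nonneg (convex_Ici 0)
      (f' := f') (f'' := fun y => 4 * (Real.log y + y⁻¹ - 1)) (by fun_prop) ?_ ?_ ?_ <;>
      rw [interior_Ici] <;> intro y hy
    · exact (hasDerivAt_f hy).hasDerivWithinAt
    · exact (hasDerivAt_f' hy).hasDerivWithinAt
    · linarith [Real.one_sub_inv_le_log_of_pos hy]
  have isMinOn_f : IsMinOn f (Set.Ici 0) 1 := by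
    refine convexOn_f.isMinOn_of_rightDeriv_eq_zero (by simp) ?_
    rw [(hasDerivAt_f one_pos).hasDerivWithinAt.derivWithin (uniqueDiffWithinAt_Ioi 1)]
    simp [f', klFun_one]
  have hmin : f 1 ≤ f x := isMinOn_f hx
  simp only [f, klFun_one] at hmin
  linarith

lemma sum_abs_sub_eq_two_mul_dTV (p q : X → ℝ) : ∑ x, |p x - q x| = 2 * dTV p q := by
  rw [dTV]
  ring

lemma dKL_eq_sum_mul_klFun {p q : X → ℝ} (hsum : ∑ x, p x = ∑ x, q x)
    (hpq : ∀ x, q x = 0 → p x = 0) : dKL p q = ∑ x, q x * klFun (p x / q x) := by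
  have hterm (x : X) :
      q x * klFun (p x / q x) = p x * Real.log (p x / q x) + (q x - p x) := by
    by_cases hq : q x = 0
    · simp [hq, hpq x hq]
    · rw [klFun_apply]
      field_simp
      ring
  simp_rw [hterm, sum_add_distrib, sum_sub_distrib, hsum, sub_self, add_zero, dKL]

theorem two_mul_dTV_sq_le_dKL {p q : X → ℝ} (hp : p ∈ stdSimplex ℝ X)
    (hq : q ∈ stdSimplex ℝ X) (hpq : ∀ x, q x = 0 → p x = 0) :
    2 * dTV p q ^ 2 ≤ dKL p q := by
  have hterm (x : X) : |p x - q x| ^ 2 ≤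
      q x * klFun (p x / q x) * ((2 * p x + 4 * q x) / 3) := by
    rw [sq_abs]
    rcases (hq.1 x).eq_or_lt' with hqx | hqx
    · simp [hqx, hpq x hqx]
    · have hscaled := mul_le_mul_of_nonneg_left
        (three_mul_sub_one_sq_le_klFun_mul (div_nonneg (hp.1 x) hqx.le)) (sq_nonneg (q x))
      have hsub : p x - q x = q x * (p x / q x - 1) := by field_simp
      have hadd : 2 * p x + 4 * q x = q x * (2 * (p x / q x) + 4) := by field_simp
      rw [hsub, hadd]
      linarith
  have hmass : ∑ x, (2 * p x + 4 * q x) / 3 = 2 := by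
    rw [← sum_div, sum_add_distrib, ← mul_sum, ← mul_sum, hp.2, hq.2]
    norm_num
  have hcauchy : (∑ x, |p x - q x|) ^ 2 ≤
      (∑ x, q x * klFun (p x / q x)) * ∑ x, (2 * p x + 4 * q x) / 3 := by
    refine sum_sq_le_sum_mul_sum_of_sq_le_mul _ (fun x _ => ?_) (fun x _ => ?_)
      fun x _ => hterm x
    · exact mul_nonneg (hq.1 x) (klFun_nonneg (div_nonneg (hp.1 x) (hq.1 x)))
    · linarith [hp.1 x, hq.1 x]
  rw [hmass, ← dKL_eq_sum_mul_klFun (hp.2.trans hq.2.symm) hpq,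
    sum_abs_sub_eq_two_mul_dTV] at hcauchy
  linarith

lemma sum_mul_dTV_le_sqrt [Fintype Z] {w : Z → ℝ} (hw : w ∈ stdSimplex ℝ Z) {p q : Z → X → ℝ}
    (hp : ∀ z, w z ≠ 0 → p z ∈ stdSimplex ℝ X) (hq : ∀ z, q z ∈ stdSimplex ℝ X)
    (hpq : ∀ z x, q z x = 0 → p z x = 0) :
    ∑ z, w z * dTV (p z) (q z) ≤ √(1 / 2 * ∑ z, w z * dKL (p z) (q z)) := by
  refine Real.le_sqrt_of_sq_le ?_
  calc (∑ z, w z * dTV (p z) (q z)) ^ 2 ≤ ∑ z, w z * dTV (p z) (q z) ^ 2 :=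
        Real.pow_arith_mean_le_arith_mean_pow_of_even _ _ _ (fun z _ => hw.1 z) hw.2 even_two
    _ ≤ ∑ z, w z * (1 / 2 * dKL (p z) (q z)) := by
        refine sum_le_sum fun z _ => ?_
        by_cases hz : w z = 0
        · simp [hz]
        · have hpinsker := two_mul_dTV_sq_le_dKL (hp z hz) (hq z) (hpq z)
          exact mul_le_mul_of_nonneg_left (by linarith) (hw.1 z)
    _ = 1 / 2 * ∑ z, w z * dKL (p z) (q z) := by
        rw [mul_sum]
        exact sum_congr rfl fun z _ => by ring

end Pinsker

section StochasticMatrix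

open scoped Matrix

variable {X Y : Type*} [Fintype X] [Fintype Y]

lemma vecMul_mem_stdSimplex {v : X → ℝ} {M : Matrix X Y ℝ} (hv : v ∈ stdSimplex ℝ X)
    (hM : ∀ x, M x ∈ stdSimplex ℝ Y) : v ᵥ* M ∈ stdSimplex ℝ Y := by
  rw [Matrix.vecMul_eq_sum]
  exact (convex_stdSimplex ℝ Y).sum_mem (fun x _ => hv.1 x) hv.2 fun x _ => hM x

lemma sum_abs_vecMul_le (v : X → ℝ) {M : Matrix X Y ℝ} (hM : ∀ x, M x ∈ stdSimplex ℝ Y) :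
    ∑ y, |(v ᵥ* M) y| ≤ ∑ x, |v x| :=
  calc ∑ y, |(v ᵥ* M) y| ≤ ∑ y, ∑ x, |v x| * M x y := by
        refine sum_le_sum fun y _ => (abs_sum_le_sum_abs _ _).trans_eq ?_
        exact sum_congr rfl fun x _ => by rw [abs_mul, abs_of_nonneg ((hM x).1 y)]
    _ = ∑ x, |v x| := by
        rw [sum_comm]
        exact sum_congr rfl fun x _ => by rw [← mul_sum, (hM x).2, mul_one]

lemma abs_dotProduct_le (v : X → ℝ) {f : X → ℝ} {C : ℝ} (hf : ∀ x, |f x| ≤ C) :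
    |v ⬝ᵥ f| ≤ C * ∑ x, |v x| := by
  rw [mul_sum]
  refine (abs_sum_le_sum_abs _ _).trans (sum_le_sum fun x _ => ?_)
  rw [abs_mul, mul_comm]
  exact mul_le_mul_of_nonneg_right (hf x) (abs_nonneg _)

lemma abs_dotProduct_le_of_mem_stdSimplex {v f : X → ℝ} {C : ℝ} (hv : v ∈ stdSimplex ℝ X)
    (hf : ∀ x, |f x| ≤ C) : |v ⬝ᵥ f| ≤ C := by
  simpa [abs_of_nonneg (hv.1 _), hv.2] using abs_dotProduct_le v hf

end StochasticMatrix

section Visitation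

open scoped Matrix

variable [Fintype S] [Fintype A] {P : S → A → S → ℝ} {R : S → A → ℝ} {μ : S → ℝ} {γ : ℝ}
  {π π' : S → A → ℝ}

/-- The state transition matrix `P_π`. Its row `s` is the distribution of the successor of `s`, so
state distributions evolve by multiplication on the left, `v ↦ v ᵥ* P_π`. -/
def policyTransition (P : S → A → S → ℝ) (π : S → A → ℝ) : Matrix S S ℝ :=
  Matrix.of fun s => π s ᵥ* Matrix.of (P s)

lemma policyTransition_mem_stdSimplex (hP : ∀ s a, P s a ∈ stdSimplex ℝ S)
    (hπ : ∀ s, π s ∈ stdSimplex ℝ A) (s : S) : policyTransition P π s ∈ stdSimplex ℝ S :=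
  vecMul_mem_stdSimplex (hπ s) (hP s)

lemma stateDist_succ (P : S → A → S → ℝ) (π : S → A → ℝ) (μ : S → ℝ) (t : ℕ) :
    stateDist P π μ (t + 1) = stateDist P π μ t ᵥ* policyTransition P π := by
  ext s'
  simp only [stateDist, policyTransition, Matrix.vecMul, dotProduct, Matrix.of_apply, ← sum_mul]
  exact sum_congr rfl fun s _ => mul_comm _ _

lemma stateDist_mem_stdSimplex (hP : ∀ s a, P s a ∈ stdSimplex ℝ S) (hμ : μ ∈ stdSimplex ℝ S)
    (hπ : ∀ s, π s ∈ stdSimplex ℝ A) (t : ℕ) : stateDist P π μ t ∈ stdSimplex ℝ S := by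
  induction t with
  | zero => exact hμ
  | succ t ih =>
    rw [stateDist_succ]
    exact vecMul_mem_stdSimplex ih (policyTransition_mem_stdSimplex hP hπ)

lemma summable_pow_mul_stateDist (hP : ∀ s a, P s a ∈ stdSimplex ℝ S) (hμ : μ ∈ stdSimplex ℝ S)
    (hγ0 : 0 ≤ γ) (hγ1 : γ < 1) (hπ : ∀ s, π s ∈ stdSimplex ℝ A) (s : S) :
    Summable fun t => γ ^ t * stateDist P π μ t s := by
  have hmem (t : ℕ) := mem_Icc_of_mem_stdSimplex (stateDist_mem_stdSimplex hP hμ hπ t) s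
  refine (summable_geometric_of_lt_one hγ0 hγ1).of_nonneg_of_le
    (fun t => mul_nonneg (pow_nonneg hγ0 t) (hmem t).1) fun t => ?_
  exact mul_le_of_le_one_right (pow_nonneg hγ0 t) (hmem t).2

lemma visitation_dotProduct (hP : ∀ s a, P s a ∈ stdSimplex ℝ S) (hμ : μ ∈ stdSimplex ℝ S)
    (hγ0 : 0 ≤ γ) (hγ1 : γ < 1) (hπ : ∀ s, π s ∈ stdSimplex ℝ A) (f : S → ℝ) :
    visitation P π μ γ ⬝ᵥ f = (1 - γ) * ∑' t, γ ^ t * (stateDist P π μ t ⬝ᵥ f) := by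
  simp only [dotProduct, visitation, mul_sum, mul_assoc, ← tsum_mul_right]
  rw [Summable.tsum_finsetSum fun s _ => by
    simpa only [mul_assoc] using
      (summable_pow_mul_stateDist hP hμ hγ0 hγ1 hπ s).mul_right (f s), mul_sum]

lemma visitation_mem_stdSimplex (hP : ∀ s a, P s a ∈ stdSimplex ℝ S) (hμ : μ ∈ stdSimplex ℝ S)
    (hγ0 : 0 ≤ γ) (hγ1 : γ < 1) (hπ : ∀ s, π s ∈ stdSimplex ℝ A) :
    visitation P π μ γ ∈ stdSimplex ℝ S := by
  have hdist := stateDist_mem_stdSimplex hP hμ hπ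
  refine ⟨fun s => mul_nonneg (sub_nonneg.2 hγ1.le) (tsum_nonneg fun t =>
    mul_nonneg (pow_nonneg hγ0 t) ((hdist t).1 s)), ?_⟩
  have hmass := visitation_dotProduct hP hμ hγ0 hγ1 hπ 1
  simp only [dotProduct_one, (hdist _).2, mul_one, tsum_geometric_of_lt_one hγ0 hγ1] at hmass
  rw [hmass, mul_inv_cancel₀ (sub_pos.2 hγ1).ne']

lemma visitation_eq_add_vecMul (hP : ∀ s a, P s a ∈ stdSimplex ℝ S) (hμ : μ ∈ stdSimplex ℝ S)
    (hγ0 : 0 ≤ γ) (hγ1 : γ < 1) (hπ : ∀ s, π s ∈ stdSimplex ℝ A) :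
    visitation P π μ γ =
      (1 - γ) • μ + γ • (visitation P π μ γ ᵥ* policyTransition P π) := by
  ext s'
  have hstep (t : ℕ) : γ ^ (t + 1) * stateDist P π μ (t + 1) s' =
      γ * (γ ^ t * (stateDist P π μ t ⬝ᵥ fun s => policyTransition P π s s')) := by
    rw [stateDist_succ, pow_succ', mul_assoc]
    rfl
  simp only [Pi.add_apply, Pi.smul_apply, smul_eq_mul, Matrix.vecMul,
    visitation_dotProduct hP hμ hγ0 hγ1 hπ]
  rw [visitation, (summable_pow_mul_stateDist hP hμ hγ0 hγ1 hπ s').tsum_eq_zero_add,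
    tsum_congr hstep, tsum_mul_left, pow_zero, one_mul, stateDist]
  ring

lemma one_sub_mul_perf (hP : ∀ s a, P s a ∈ stdSimplex ℝ S) (hμ : μ ∈ stdSimplex ℝ S)
    (hγ0 : 0 ≤ γ) (hγ1 : γ < 1) (hπ : ∀ s, π s ∈ stdSimplex ℝ A) :
    (1 - γ) * perf P R π μ γ = visitation P π μ γ ⬝ᵥ fun s => π s ⬝ᵥ R s := by
  rw [visitation_dotProduct hP hμ hγ0 hγ1 hπ, perf]
  simp only [dotProduct, mul_sum]
  congr! 6
  ring

lemma sum_abs_vecMul_policyTransition_sub (ρ : S → ℝ) (P : S → A → S → ℝ)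
    (π π' : S → A → ℝ) :
    ∑ s', |(ρ ᵥ* (policyTransition P π - policyTransition P π')) s'| = errG ρ π π' P := by
  simp only [errG, policyTransition, Matrix.vecMul, dotProduct, Matrix.sub_apply,
    Matrix.of_apply, ← sum_sub_distrib, sub_mul]

lemma one_sub_mul_sum_abs_visitation_sub_le (hP : ∀ s a, P s a ∈ stdSimplex ℝ S)
    (hμ : μ ∈ stdSimplex ℝ S) (hγ0 : 0 ≤ γ) (hγ1 : γ < 1) (hπ : ∀ s, π s ∈ stdSimplex ℝ A)
    (hπ' : ∀ s, π' s ∈ stdSimplex ℝ A) :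
    (1 - γ) * ∑ s, |visitation P π μ γ s - visitation P π' μ γ s| ≤
      γ * errG (visitation P π μ γ) π π' P := by
  set d := visitation P π μ γ
  set d' := visitation P π' μ γ
  set M := policyTransition P π
  set M' := policyTransition P π'
  have hflow : d - d' = γ • ((d - d') ᵥ* M') + γ • (d ᵥ* (M - M')) := by
    have hd : d = (1 - γ) • μ + γ • (d ᵥ* M) := visitation_eq_add_vecMul hP hμ hγ0 hγ1 hπ
    have hd' : d' = (1 - γ) • μ + γ • (d' ᵥ* M') :=
      visitation_eq_add_vecMul hP hμ hγ0 hγ1 hπ'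
    calc d - d' = γ • (d ᵥ* M) - γ • (d' ᵥ* M') := by
          conv_lhs => rw [hd, hd', add_sub_add_left_eq_sub]
      _ = γ • ((d - d') ᵥ* M') + γ • (d ᵥ* (M - M')) := by
          rw [Matrix.sub_vecMul, Matrix.vecMul_sub]
          module
  have hcontract : ∑ s, |((d - d') ᵥ* M') s| ≤ ∑ s, |d s - d' s| :=
    sum_abs_vecMul_le (d - d') (policyTransition_mem_stdSimplex hP hπ')
  have hsum : ∑ s, |d s - d' s| ≤ γ * ∑ s, |d s - d' s| + γ * errG d π π' P :=
    calc ∑ s, |d s - d' s|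
        ≤ ∑ s, (γ * |((d - d') ᵥ* M') s| + γ * |(d ᵥ* (M - M')) s|) := by
          refine sum_le_sum fun s _ => ?_
          have hs : d s - d' s = γ * ((d - d') ᵥ* M') s + γ * (d ᵥ* (M - M')) s :=
            congrFun hflow s
          rw [hs]
          exact (abs_add_le _ _).trans_eq (by rw [abs_mul, abs_mul, abs_of_nonneg hγ0])
      _ = γ * ∑ s, |((d - d') ᵥ* M') s| + γ * errG d π π' P := by
          rw [sum_add_distrib, ← mul_sum, ← mul_sum, sum_abs_vecMul_policyTransition_sub]
      _ ≤ γ * ∑ s, |d s - d' s| + γ * errG d π π' P := by gcongr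
  linarith

theorem perfDiff_le_errF_add_errG {Rmax : ℝ} (hP : ∀ s a, P s a ∈ stdSimplex ℝ S)
    (hRmax : 0 ≤ Rmax) (hR : ∀ s a, |R s a| ≤ Rmax) (hμ : μ ∈ stdSimplex ℝ S)
    (hγ0 : 0 ≤ γ) (hγ1 : γ < 1) (hπ : ∀ s, π s ∈ stdSimplex ℝ A)
    (hπ' : ∀ s, π' s ∈ stdSimplex ℝ A) :
    perfDiff P R μ γ π π' ≤ 1 / (1 - γ) * errF (visitation P π μ γ) π π' R +
      γ * Rmax / (1 - γ) ^ 2 * errG (visitation P π μ γ) π π' P := by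
  have hγ : 0 < 1 - γ := sub_pos.2 hγ1
  set d := visitation P π μ γ
  set d' := visitation P π' μ γ
  have hdecomp : (1 - γ) * (perf P R π μ γ - perf P R π' μ γ) =
      (∑ s, d s * ∑ a, (π s a - π' s a) * R s a) + (d - d') ⬝ᵥ fun s => π' s ⬝ᵥ R s := by
    rw [mul_sub, one_sub_mul_perf hP hμ hγ0 hγ1 hπ, one_sub_mul_perf hP hμ hγ0 hγ1 hπ',
      sub_dotProduct]
    simp only [dotProduct, sub_mul, sum_sub_distrib, mul_sub]
    ring
  have hreward : |(d - d') ⬝ᵥ fun s => π' s ⬝ᵥ R s| ≤ Rmax * ∑ s, |d s - d' s| :=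
    abs_dotProduct_le _ fun s => abs_dotProduct_le_of_mem_stdSimplex (hπ' s) (hR s)
  have hshift : ∑ s, |d s - d' s| ≤ γ * errG d π π' P / (1 - γ) := by
    rw [le_div_iff₀' hγ]
    exact one_sub_mul_sum_abs_visitation_sub_le hP hμ hγ0 hγ1 hπ hπ'
  have hscaled : (1 - γ) * perfDiff P R μ γ π π' ≤
      errF d π π' R + Rmax * (γ * errG d π π' P / (1 - γ)) :=
    calc (1 - γ) * perfDiff P R μ γ π π'
        = |(1 - γ) * (perf P R π μ γ - perf P R π' μ γ)| := by
          rw [abs_mul, abs_of_pos hγ, perfDiff]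
      _ ≤ errF d π π' R + Rmax * ∑ s, |d s - d' s| := by
          rw [hdecomp]
          exact (abs_add_le _ _).trans (add_le_add_right hreward _)
      _ ≤ errF d π π' R + Rmax * (γ * errG d π π' P / (1 - γ)) := by gcongr
  rw [← le_div_iff₀' hγ] at hscaled
  refine hscaled.trans_eq ?_
  field_simp

end Visitation

section PolicyError

variable [Fintype S] [Fintype A] {X : Type*} [Fintype X] {ρ : S → ℝ} {π π' : S → A → ℝ}

lemma errF_le_sum_mul_abs (hρ : ∀ s, 0 ≤ ρ s) (π π' F : S → A → ℝ) :
    errF ρ π π' F ≤ ∑ s, ρ s * ∑ a, |π s a - π' s a| * |F s a| := by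
  refine (abs_sum_le_sum_abs _ _).trans (sum_le_sum fun s _ => ?_)
  rw [abs_mul, abs_of_nonneg (hρ s)]
  refine mul_le_mul_of_nonneg_left ((abs_sum_le_sum_abs _ _).trans_eq ?_) (hρ s)
  simp only [abs_mul]

lemma errF_le_mul_sum_dTV (hρ : ∀ s, 0 ≤ ρ s) (π π' : S → A → ℝ) {F : S → A → ℝ} {C : ℝ}
    (hF : ∀ s a, |F s a| ≤ C) :
    errF ρ π π' F ≤ 2 * C * ∑ s, ρ s * dTV (π s) (π' s) := by
  refine (errF_le_sum_mul_abs hρ π π' F).trans ?_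
  rw [mul_sum]
  refine sum_le_sum fun s _ => ?_
  calc ρ s * ∑ a, |π s a - π' s a| * |F s a| ≤ ρ s * ∑ a, |π s a - π' s a| * C := by
        gcongr with a
        · exact hρ s
        · exact hF s a
    _ = 2 * C * (ρ s * dTV (π s) (π' s)) := by
        rw [← sum_mul, sum_abs_sub_eq_two_mul_dTV]
        ring

lemma sum_errF_le_two_mul_sum_dTV (hρ : ∀ s, 0 ≤ ρ s) (π π' : S → A → ℝ)
    {G : S → A → X → ℝ} (hG : ∀ s a, G s a ∈ stdSimplex ℝ X) :
    ∑ x, errF ρ π π' (fun s a => G s a x) ≤ 2 * ∑ s, ρ s * dTV (π s) (π' s) :=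
  calc ∑ x, errF ρ π π' (fun s a => G s a x)
      ≤ ∑ x, ∑ s, ρ s * ∑ a, |π s a - π' s a| * |G s a x| :=
        sum_le_sum fun x _ => errF_le_sum_mul_abs hρ π π' _
    _ = ∑ s, ρ s * ∑ a, ∑ x, |π s a - π' s a| * |G s a x| := by
        rw [sum_comm]
        exact sum_congr rfl fun s _ => by rw [← mul_sum, sum_comm]
    _ = 2 * ∑ s, ρ s * dTV (π s) (π' s) := by
        simp only [abs_of_nonneg ((hG _ _).1 _), ← mul_sum, (hG _ _).2, mul_one,
          sum_abs_sub_eq_two_mul_dTV, mul_left_comm _ (2 : ℝ)]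

lemma abs_sub_le_one_of_mem_stdSimplex {p q : X → ℝ} (hp : p ∈ stdSimplex ℝ X)
    (hq : q ∈ stdSimplex ℝ X) (x : X) : |p x - q x| ≤ 1 := by
  have hpx := mem_Icc_of_mem_stdSimplex hp x
  have hqx := mem_Icc_of_mem_stdSimplex hq x
  rw [abs_le]
  constructor <;> linarith [hpx.1, hpx.2, hqx.1, hqx.2]

lemma errF_le_sum_abs_sub_add_errF (hρ : ∀ s, 0 ≤ ρ s) (hπ : ∀ s, π s ∈ stdSimplex ℝ A)
    (hπ' : ∀ s, π' s ∈ stdSimplex ℝ A) (F F' : S → A → ℝ) :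
    errF ρ π π' F ≤ ∑ s, ρ s * ∑ a, |F s a - F' s a| + errF ρ π π' F' := by
  have htriangle : errF ρ π π' F ≤ errF ρ π π' (F - F') + errF ρ π π' F' := by
    refine le_of_eq_of_le ?_ (abs_add_le _ _)
    rw [← sum_add_distrib]
    simp only [errF, ← mul_add, ← sum_add_distrib, Pi.sub_apply, sub_add_cancel]
  have hmodel : errF ρ π π' (F - F') ≤ ∑ s, ρ s * ∑ a, |F s a - F' s a| := by
    refine (errF_le_sum_mul_abs hρ π π' _).trans ?_
    gcongr with s _ a
    · exact hρ s
    · exact mul_le_of_le_one_left (abs_nonneg _)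
        (abs_sub_le_one_of_mem_stdSimplex (hπ s) (hπ' s) a)
  linarith

lemma sum_errF_le_sum_dTV_add_sum_errF (hρ : ∀ s, 0 ≤ ρ s) (hπ : ∀ s, π s ∈ stdSimplex ℝ A)
    (hπ' : ∀ s, π' s ∈ stdSimplex ℝ A) (G G' : S → A → X → ℝ) :
    ∑ x, errF ρ π π' (fun s a => G s a x) ≤
      2 * ∑ s, ρ s * ∑ a, dTV (G s a) (G' s a) + ∑ x, errF ρ π π' (fun s a => G' s a x) :=
  calc ∑ x, errF ρ π π' (fun s a => G s a x)
      ≤ ∑ x, (∑ s, ρ s * ∑ a, |G s a x - G' s a x| + errF ρ π π' (fun s a => G' s a x)) :=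
        sum_le_sum fun x _ => errF_le_sum_abs_sub_add_errF hρ hπ hπ' _ _
    _ = ∑ s, ρ s * ∑ a, ∑ x, |G s a x - G' s a x| +
          ∑ x, errF ρ π π' (fun s a => G' s a x) := by
        rw [sum_add_distrib, sum_comm]
        simp only [← mul_sum, sum_comm (s := (univ : Finset A)) (t := (univ : Finset X))]
    _ = 2 * ∑ s, ρ s * ∑ a, dTV (G s a) (G' s a) +
          ∑ x, errF ρ π π' (fun s a => G' s a x) := by
        simp only [sum_abs_sub_eq_two_mul_dTV, ← mul_sum, mul_left_comm _ (2 : ℝ)]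

end PolicyError

section Marginalization

variable [Fintype S] [DecidableEq Z] {φ : S → Z} {ρ : S → ℝ} {π : S → A → ℝ}

lemma margDist_nonneg (φ : S → Z) (hρ : ∀ s, 0 ≤ ρ s) (z : Z) : 0 ≤ margDist φ ρ z :=
  sum_nonneg fun s _ => ite_nonneg (hρ s) le_rfl

lemma sum_margDist_mul [Fintype Z] (φ : S → Z) (ρ : S → ℝ) (g : Z → ℝ) :
    ∑ z, margDist φ ρ z * g z = ∑ s, ρ s * g (φ s) := by
  simp only [margDist, sum_mul, ite_mul, zero_mul]
  rw [sum_comm]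
  simp only [sum_ite_eq, mem_univ, if_true]

lemma margDist_mem_stdSimplex [Fintype Z] (φ : S → Z) (hρ : ρ ∈ stdSimplex ℝ S) :
    margDist φ ρ ∈ stdSimplex ℝ Z := by
  refine ⟨margDist_nonneg φ hρ.1, ?_⟩
  simpa [hρ.2] using sum_margDist_mul φ ρ 1

lemma margDist_mul_margPolicy (hρ : ∀ s, 0 ≤ ρ s) (π : S → A → ℝ) (z : Z) (a : A) :
    margDist φ ρ z * margPolicy φ ρ π z a = margDist φ (fun s => ρ s * π s a) z := by
  by_cases hz : margDist φ ρ z = 0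
  · have hfiber (s : S) (hs : φ s = z) : ρ s = 0 := by
      have hzero := (sum_eq_zero_iff_of_nonneg fun s _ => ite_nonneg (hρ s) le_rfl).1 hz
      simpa [hs] using hzero s (mem_univ s)
    rw [hz, zero_mul, margDist]
    exact (sum_eq_zero fun s _ => by simp +contextual [hfiber]).symm
  · exact mul_div_cancel₀ _ hz

lemma margPolicy_mem_stdSimplex [Fintype A] (hρ : ∀ s, 0 ≤ ρ s)
    (hπ : ∀ s, π s ∈ stdSimplex ℝ A) {z : Z} (hz : margDist φ ρ z ≠ 0) :
    margPolicy φ ρ π z ∈ stdSimplex ℝ A := by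
  refine ⟨fun a => div_nonneg ?_ (margDist_nonneg φ hρ z), mul_left_cancel₀ hz ?_⟩
  · exact margDist_nonneg φ (fun s => mul_nonneg (hρ s) ((hπ s).1 a)) z
  · simp only [mul_sum, margDist_mul_margPolicy hρ, mul_one]
    simp only [margDist]
    rw [sum_comm]
    refine sum_congr rfl fun s _ => ?_
    split_ifs
    · rw [← mul_sum, (hπ s).2, mul_one]
    · exact sum_const_zero

lemma errF_comp_eq_errF_margPolicy [Fintype A] [Fintype Z] (φ : S → Z) (hρ : ∀ s, 0 ≤ ρ s)
    (π : S → A → ℝ) (q F : Z → A → ℝ) :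
    errF ρ π (fun s => q (φ s)) (fun s => F (φ s)) =
      errF (margDist φ ρ) (margPolicy φ ρ π) q F := by
  have hmarg (a : A) : ∑ s, ρ s * ((π s a - q (φ s) a) * F (φ s) a) =
      ∑ z, margDist φ ρ z * ((margPolicy φ ρ π z a - q z a) * F z a) := by
    simp only [sub_mul, mul_sub, sum_sub_distrib, ← mul_assoc, margDist_mul_margPolicy hρ]
    simp only [sum_margDist_mul φ (fun s => ρ s * π s a) fun z => F z a, mul_assoc,
      sum_margDist_mul φ ρ fun z => q z a * F z a]
  simp only [errF, mul_sum]
  rw [sum_comm, sum_congr rfl fun a _ => hmarg a, sum_comm]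

lemma errF_le_sum_abs_sub_add_sum_margDist_mul_dTV [Fintype A] [Fintype Z]
    (hρ : ∀ s, 0 ≤ ρ s) (hπ : ∀ s, π s ∈ stdSimplex ℝ A) {q : Z → A → ℝ}
    (hq : ∀ z, q z ∈ stdSimplex ℝ A) (φ : S → Z) (F : S → A → ℝ) {FZ : Z → A → ℝ} {C : ℝ}
    (hFZ : ∀ z a, |FZ z a| ≤ C) :
    errF ρ π (fun s => q (φ s)) F ≤ ∑ s, ρ s * ∑ a, |F s a - FZ (φ s) a| +
      2 * C * ∑ z, margDist φ ρ z * dTV (margPolicy φ ρ π z) (q z) := by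
  refine (errF_le_sum_abs_sub_add_errF hρ hπ (fun s => hq (φ s)) F
    fun s => FZ (φ s)).trans (add_le_add_right ?_ _)
  rw [errF_comp_eq_errF_margPolicy φ hρ]
  exact errF_le_mul_sum_dTV (margDist_nonneg φ hρ) _ _ hFZ

lemma sum_errF_le_sum_dTV_add_sum_margDist_mul_dTV [Fintype A] [Fintype Z]
    {X : Type*} [Fintype X] (hρ : ∀ s, 0 ≤ ρ s) (hπ : ∀ s, π s ∈ stdSimplex ℝ A)
    {q : Z → A → ℝ} (hq : ∀ z, q z ∈ stdSimplex ℝ A) (φ : S → Z) (G : S → A → X → ℝ)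
    {GZ : Z → A → X → ℝ} (hGZ : ∀ z a, GZ z a ∈ stdSimplex ℝ X) :
    ∑ x, errF ρ π (fun s => q (φ s)) (fun s a => G s a x) ≤
      2 * ∑ s, ρ s * ∑ a, dTV (G s a) (GZ (φ s) a) +
        2 * ∑ z, margDist φ ρ z * dTV (margPolicy φ ρ π z) (q z) := by
  refine (sum_errF_le_sum_dTV_add_sum_errF hρ hπ (fun s => hq (φ s)) G
    fun s => GZ (φ s)).trans (add_le_add_right ?_ _)
  refine (sum_congr rfl fun x _ => ?_).trans_le
    (sum_errF_le_two_mul_sum_dTV (margDist_nonneg φ hρ) (margPolicy φ ρ π) q hGZ)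
  exact errF_comp_eq_errF_margPolicy φ hρ π q fun z a => GZ z a x

end Marginalization

theorem on_policy_latent_imitation_bound_general [Fintype S] [Fintype A] [Fintype Z]
    [DecidableEq Z] {P : S → A → S → ℝ} (hP : ∀ s a, P s a ∈ stdSimplex ℝ S)
    {R : S → A → ℝ} {Rmax : ℝ} (hRmax : 0 ≤ Rmax) (hR : ∀ s a, |R s a| ≤ Rmax)
    {μ : S → ℝ} (hμ : μ ∈ stdSimplex ℝ S) {γ : ℝ} (hγ0 : 0 ≤ γ) (hγ1 : γ < 1)
    {πstar : S → A → ℝ} (hπstar : ∀ s, πstar s ∈ stdSimplex ℝ A) (φ : S → Z)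
    {RZ : Z → A → ℝ} (hRZ : ∀ z a, |RZ z a| ≤ Rmax)
    {PZ : Z → A → S → ℝ} (hPZ : ∀ z a, PZ z a ∈ stdSimplex ℝ S)
    {πZ : Z → A → ℝ} (hπZ : ∀ z, πZ z ∈ stdSimplex ℝ A)
    (hsupp : ∀ z a, πZ z a = 0 → margPolicy φ (visitation P πstar μ γ) πstar z a = 0) :
    perfDiff P R μ γ (fun s => πZ (φ s)) πstar ≤
      ((1 / (1 - γ)) * ∑ s : S, visitation P πstar μ γ s * ∑ a : A, |R s a - RZ (φ s) a|
          + (2 * γ * Rmax / (1 - γ) ^ 2) *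
              ∑ s : S, visitation P πstar μ γ s * ∑ a : A, dTV (P s a) (PZ (φ s) a))
        + (2 * Rmax / (1 - γ) ^ 2) *
            √((1 / 2) * ∑ z : Z, margDist φ (visitation P πstar μ γ) z *
              dKL (margPolicy φ (visitation P πstar μ γ) πstar z) (πZ z)) := by
  have hγ : 0 < 1 - γ := sub_pos.2 hγ1
  have hd := visitation_mem_stdSimplex hP hμ hγ0 hγ1 hπstar
  set d := visitation P πstar μ γ
  have hw := margDist_mem_stdSimplex φ hd
  set T := ∑ z, margDist φ d z * dTV (margPolicy φ d πstar z) (πZ z)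
  have hT := sum_mul_dTV_le_sqrt hw (fun z => margPolicy_mem_stdSimplex hd.1 hπstar) hπZ hsupp
  have hreward := errF_le_sum_abs_sub_add_sum_margDist_mul_dTV hd.1 hπstar hπZ φ R hRZ
  have htransition : errG d πstar (fun s => πZ (φ s)) P ≤
      2 * ∑ s, d s * ∑ a, dTV (P s a) (PZ (φ s) a) + 2 * T :=
    sum_errF_le_sum_dTV_add_sum_margDist_mul_dTV hd.1 hπstar hπZ φ P hPZ
  calc perfDiff P R μ γ (fun s => πZ (φ s)) πstar
      = perfDiff P R μ γ πstar (fun s => πZ (φ s)) := abs_sub_comm _ _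
    _ ≤ 1 / (1 - γ) * errF d πstar (fun s => πZ (φ s)) R +
          γ * Rmax / (1 - γ) ^ 2 * errG d πstar (fun s => πZ (φ s)) P :=
        perfDiff_le_errF_add_errG hP hRmax hR hμ hγ0 hγ1 hπstar fun s => hπZ (φ s)
    _ ≤ 1 / (1 - γ) * (∑ s, d s * ∑ a, |R s a - RZ (φ s) a| + 2 * Rmax * T) +
          γ * Rmax / (1 - γ) ^ 2 *
            (2 * ∑ s, d s * ∑ a, dTV (P s a) (PZ (φ s) a) + 2 * T) := by gcongr
    _ = 1 / (1 - γ) * ∑ s, d s * ∑ a, |R s a - RZ (φ s) a| +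
          2 * γ * Rmax / (1 - γ) ^ 2 * ∑ s, d s * ∑ a, dTV (P s a) (PZ (φ s) a) +
          2 * Rmax / (1 - γ) ^ 2 * T := by
        field_simp
        ring
    _ ≤ _ := by gcongr

theorem on_policy_latent_imitation_bound
    [Fintype S] [Fintype A] [Fintype Z] [Nonempty S] [Nonempty A] [DecidableEq Z]
    (P : S → A → S → ℝ) (hP0 : ∀ s a s', 0 ≤ P s a s')
    (hP1 : ∀ s a, ∑ s' : S, P s a s' = 1)
    (R : S → A → ℝ) (Rmax : ℝ) (hRmax : 0 ≤ Rmax) (hR : ∀ s a, |R s a| ≤ Rmax)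
    (μ : S → ℝ) (hμ0 : ∀ s, 0 ≤ μ s) (hμ1 : ∑ s : S, μ s = 1)
    (γ : ℝ) (hγ0 : 0 ≤ γ) (hγ1 : γ < 1)
    (πstar : S → A → ℝ)
    (hπs0 : ∀ s a, 0 ≤ πstar s a) (hπs1 : ∀ s, ∑ a : A, πstar s a = 1)
    (φ : S → Z)
    (RZ : Z → A → ℝ) (hRZ : ∀ z a, |RZ z a| ≤ Rmax)
    (PZ : Z → A → S → ℝ) (hPZ0 : ∀ z a s', 0 ≤ PZ z a s')
    (hPZ1 : ∀ z a, ∑ s' : S, PZ z a s' = 1)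
    (πZ : Z → A → ℝ) (hπZ0 : ∀ z a, 0 < πZ z a) (hπZ1 : ∀ z, ∑ a : A, πZ z a = 1) :
    perfDiff P R μ γ (fun s => πZ (φ s)) πstar ≤
      ((1 / (1 - γ)) * ∑ s : S, visitation P πstar μ γ s * ∑ a : A, |R s a - RZ (φ s) a|
          + (2 * γ * Rmax / (1 - γ) ^ 2) *
              ∑ s : S, visitation P πstar μ γ s * ∑ a : A, dTV (P s a) (PZ (φ s) a))
        + (2 * Rmax / (1 - γ) ^ 2) *
            Real.sqrt ((1 / 2) * ∑ z : Z, margDist φ (visitation P πstar μ γ) z *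
              dKL (margPolicy φ (visitation P πstar μ γ) πstar z) (πZ z)) := by
  exact on_policy_latent_imitation_bound_general (fun s a => ⟨hP0 s a, hP1 s a⟩) hRmax hR
    ⟨hμ0, hμ1⟩ hγ0 hγ1 (fun s => ⟨hπs0 s, hπs1 s⟩) φ hRZ (fun z a => ⟨hPZ0 z a, hPZ1 z a⟩)
    (fun z => ⟨fun a => (hπZ0 z a).le, hπZ1 z⟩) fun z a h => absurd h (hπZ0 z a).ne'
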